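/- For every integer n ≥ 6, q(L_{n,1}) > q(Γ_{n,2}), where q denotes the signless Laplacian spectral radius. -/

import Mathlib

open SimpleGraph

/-- `G` contains a cycle of length `l`. -/
def HasCycleLen {V : Type} (G : SimpleGraph V) (l : ℕ) : Prop :=
  ∃ (v : V) (c : G.Walk v v), c.IsCycle ∧ c.length = l

/-- The circumference of `G`: the length of a longest cycle. -/
noncomputable def circumference {V : Type} (G : SimpleGraph V) : ℕ :=
  sSup {l | HasCycleLen G l}

/-- `G` is weakly pancyclic with girth 3: it contains a cycle of every length `l`
with `3 ≤ l ≤ c(G)`. -/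
def WeaklyPancyclic3 {V : Type} (G : SimpleGraph V) : Prop :=
  HasCycleLen G 3 ∧ ∀ l : ℕ, 3 ≤ l → l ≤ circumference G → HasCycleLen G l

/-- The number of edges of `G`. -/
noncomputable def edgeCount {V : Type} (G : SimpleGraph V) : ℕ :=
  Nat.card G.edgeSet

/-- The degree of `v` in `G`. -/
noncomputable def degCount {V : Type} (G : SimpleGraph V) (v : V) : ℕ :=
  Nat.card (G.neighborSet v)

/-- The spectral radius of `G`: the largest eigenvalue of the adjacency matrix. -/
noncomputable def specRad {V : Type} [Finite V] (G : SimpleGraph V) : ℝ :=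
  letI := Fintype.ofFinite V
  letI := Classical.decEq V
  letI := Classical.decRel G.Adj
  sSup (spectrum ℝ (G.adjMatrix ℝ))

/-- The signless Laplacian spectral radius of `G`: the largest eigenvalue of `D(G) + A(G)`. -/
noncomputable def qSpecRad {V : Type} [Finite V] (G : SimpleGraph V) : ℝ :=
  letI := Fintype.ofFinite V
  letI := Classical.decEq V
  letI := Classical.decRel G.Adj
  sSup (spectrum ℝ (Matrix.diagonal (fun v => (degCount G v : ℝ)) + G.adjMatrix ℝ))

/-- `L_{n,k} = K_1 ∨ (K_{n-k-1} + K_k)`: vertex `0` is the common vertex of a clique on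
the `n - k` vertices `{0, …, n-k-1}` and a clique on the `k+1` vertices `{0} ∪ {n-k, …, n-1}`. -/
def Lgraph (n k : ℕ) : SimpleGraph (Fin n) :=
  SimpleGraph.fromRel (fun u v =>
    u.val = 0 ∨ v.val = 0 ∨ (u.val < n - k ∧ v.val < n - k) ∨
      (n - k ≤ u.val ∧ n - k ≤ v.val))

/-- `Γ_{n,t} = K_2 ∨ (K_{n-2-t} + t·K_1)`: vertices `0,1` are joined to everything,
vertices `2, …, n-t-1` form a clique, and vertices `n-t, …, n-1` are independent. -/
def GammaGraph (n t : ℕ) : SimpleGraph (Fin n) :=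
  SimpleGraph.fromRel (fun u v =>
    u.val < 2 ∨ v.val < 2 ∨ (u.val < n - t ∧ v.val < n - t))

/-- `F` is a member of the family `F_{n,k}`: there is a clique `K` on `n - k` vertices
such that each connected component of `F - K` is a clique all of whose vertices are
adjacent to one single common vertex of `K` and to no other vertex of `K`. -/
def MemF (n k : ℕ) (F : SimpleGraph (Fin n)) : Prop :=
  ∃ K : Finset (Fin n), K.card = n - k ∧ F.IsClique (↑K : Set (Fin n)) ∧
    (∀ u v : ({x : Fin n | x ∉ K} : Set (Fin n)),
      (F.induce {x : Fin n | x ∉ K}).Reachable u v → (u = v ∨ F.Adj u.1 v.1)) ∧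
    (∀ u : ({x : Fin n | x ∉ K} : Set (Fin n)), ∃! w : Fin n, w ∈ K ∧ F.Adj u.1 w) ∧
    (∀ u v : ({x : Fin n | x ∉ K} : Set (Fin n)),
      (F.induce {x : Fin n | x ∉ K}).Reachable u v →
        ∀ w ∈ K, F.Adj u.1 w → F.Adj v.1 w)

/-- `G` is a subgraph of `H` (up to relabelling): there is an injective graph
homomorphism from `G` to `H`. -/
def IsSubgraphOf {n : ℕ} (G H : SimpleGraph (Fin n)) : Prop :=
  ∃ f : G →g H, Function.Injective f

/-!
The bounds meet at `2(n - 2)`, the signless Laplacian spectral radius of `K_{n-1}`.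

From below, the Rayleigh quotient of `Q` at the indicator vector of a clique on `s` vertices is the
average over the clique of `d(v) + s - 1`, which exceeds `2(s - 1)` as soon as an edge leaves the
clique; in `L_{n,1}` there is such a clique with `s = n - 1`.

From above, testing the nonnegative matrix `Q` on the positive vector of degrees gives
`q ≤ max_v (d(v) + m(v))`, where `m(v)` is the average degree of the neighbours of `v`. In a graph
without isolated vertices `d(v) m(v) + n - 1 ≤ 2e`, and then `(n - 1 - d(v)) (n - 1 - m(v)) ≥ 0`
gives `q ≤ 2e / (n - 1) + n - 2` (Feng and Yu). For `Γ_{n,2}`, where `2e = (n - 2)(n - 3) + 8`, the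
right-hand side is at most `2(n - 2)` exactly when `n ≥ 6`.
-/

open Finset Matrix

section Matrix

variable {ι : Type*} [Fintype ι] [DecidableEq ι]

theorem dotProduct_mulVec_le_sSup_spectrum_mul {A : Matrix ι ι ℝ} (hA : A.IsHermitian)
    (x : ι → ℝ) : x ⬝ᵥ A *ᵥ x ≤ sSup (spectrum ℝ A) * (x ⬝ᵥ x) := by
  have hpsd : (algebraMap ℝ _ (sSup (spectrum ℝ A)) - A).PosSemidef := by
    refine posSemidef_iff_isHermitian_and_spectrum_nonneg.mpr
      ⟨(IsSelfAdjoint.algebraMap _ (.all _)).sub hA, ?_⟩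
    rw [← spectrum.singleton_sub_eq, Set.singleton_sub]
    rintro _ ⟨μ, hμ, rfl⟩
    exact sub_nonneg.mpr (le_csSup A.finite_spectrum.bddAbove hμ)
  have hform := hpsd.dotProduct_mulVec_nonneg x
  simpa [sub_mulVec, Algebra.algebraMap_eq_smul_one, smul_mulVec] using hform

theorem sum_sum_le_sSup_spectrum_mul_card {A : Matrix ι ι ℝ} (hA : A.IsHermitian)
    (s : Finset ι) : ∑ i ∈ s, ∑ j ∈ s, A i j ≤ sSup (spectrum ℝ A) * #s := by
  simpa [dotProduct, mulVec] using
    dotProduct_mulVec_le_sSup_spectrum_mul hA fun i ↦ if i ∈ s then 1 else 0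

-- Gershgorin's theorem for the conjugate of `M` by the diagonal matrix of `w`.
theorem le_of_mem_spectrum_of_mulVec_le {M : Matrix ι ι ℝ} {w : ι → ℝ} {c μ : ℝ}
    (hM : ∀ i j, i ≠ j → 0 ≤ M i j) (hw : ∀ i, 0 < w i) (hMw : M *ᵥ w ≤ c • w)
    (hμ : μ ∈ spectrum ℝ M) : μ ≤ c := by
  let W : (Matrix ι ι ℝ)ˣ :=
    ⟨diagonal w, diagonal w⁻¹, by simp [(hw _).ne'], by simp [(hw _).ne']⟩
  have hW (i j) : (W⁻¹ * M * W : Matrix ι ι ℝ) i j = (w i)⁻¹ * M i j * w j := by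
    simp [W]
  rw [← spectrum.units_conjugate' (u := W), ← spectrum_toLin',
    ← Module.End.hasEigenvalue_iff_mem_spectrum] at hμ
  obtain ⟨i, hi⟩ := eigenvalue_mem_ball hμ
  have hradius : ∑ j ∈ univ.erase i, ‖(W⁻¹ * M * W : Matrix ι ι ℝ) i j‖ =
      ∑ j ∈ univ.erase i, (w i)⁻¹ * M i j * w j := by
    refine sum_congr rfl fun j hj ↦ ?_
    have := hM i j (ne_of_mem_erase hj).symm
    have := hw i
    have := hw j
    rw [hW, Real.norm_of_nonneg (by positivity)]
  rw [Metric.mem_closedBall, Real.dist_eq, hradius, hW] at hi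
  calc μ ≤ (w i)⁻¹ * M i i * w i + ∑ j ∈ univ.erase i, (w i)⁻¹ * M i j * w j := by
        linarith [le_abs_self (μ - (w i)⁻¹ * M i i * w i)]
    _ = (w i)⁻¹ * (M *ᵥ w) i := by
        rw [add_sum_erase univ (fun j ↦ (w i)⁻¹ * M i j * w j) (mem_univ i)]
        simp [mulVec, dotProduct, mul_sum, mul_assoc]
    _ ≤ (w i)⁻¹ * (c * w i) :=
        mul_le_mul_of_nonneg_left (hMw i) (inv_nonneg.mpr (hw i).le)
    _ = c := by field_simp [(hw i).ne']

end Matrix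

section Clique

variable {V : Type*} {G : SimpleGraph V}

theorem card_le_degree_add_one_of_isClique {s : Finset V} (hs : G.IsClique s) {v : V}
    [Fintype (G.neighborSet v)] (hv : v ∈ s) : #s ≤ G.degree v + 1 := by
  classical
  have hsub : s.erase v ⊆ G.neighborFinset v := fun u hu ↦ by
    obtain ⟨huv, hus⟩ := mem_erase.mp hu
    exact (G.mem_neighborFinset v u).mpr (hs hv hus huv.symm)
  grw [← card_neighborFinset_eq_degree, ← hsub, card_erase_add_one hv]

theorem card_le_degree_of_isClique_of_adj {s : Finset V} (hs : G.IsClique s) {u v : V}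
    [Fintype (G.neighborSet u)] (hu : u ∈ s) (hv : v ∉ s) (huv : G.Adj u v) : #s ≤ G.degree u := by
  classical
  have hsub : insert v (s.erase u) ⊆ G.neighborFinset u := fun w hw ↦ by
    rw [mem_neighborFinset]
    obtain rfl | hw := mem_insert.mp hw
    · exact huv
    · exact hs hu (mem_of_mem_erase hw) (ne_of_mem_erase hw).symm
  grw [← card_neighborFinset_eq_degree, ← hsub,
    card_insert_of_notMem (hv ∘ mem_of_mem_erase), card_erase_add_one hu]

end Clique

section SignlessLaplacian

variable {V : Type*} [Fintype V] [DecidableEq V] (G : SimpleGraph V) [DecidableRel G.Adj]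

/-- The signless Laplacian `Q(G) = D(G) + A(G)`, the matrix whose largest eigenvalue is
`qSpecRad G`, built from Mathlib's degree and adjacency matrices. -/
def signlessLapMatrix : Matrix V V ℝ :=
  G.degMatrix ℝ + G.adjMatrix ℝ

theorem isHermitian_signlessLapMatrix : (signlessLapMatrix G).IsHermitian :=
  (G.isHermitian_degMatrix ℝ).add (G.isHermitian_adjMatrix ℝ)

theorem signlessLapMatrix_apply_of_ne {u v : V} (huv : u ≠ v) :
    signlessLapMatrix G u v = if G.Adj u v then 1 else 0 := by
  simp [signlessLapMatrix, degMatrix, huv]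

theorem signlessLapMatrix_mulVec_apply (x : V → ℝ) (v : V) :
    (signlessLapMatrix G *ᵥ x) v = G.degree v * x v + ∑ u ∈ G.neighborFinset v, x u := by
  simp only [signlessLapMatrix, add_mulVec, Pi.add_apply, degMatrix_mulVec_apply,
    adjMatrix_mulVec_apply]

variable {G}

theorem sum_signlessLapMatrix_apply_of_isClique {s : Finset V} (hs : G.IsClique s) {v : V}
    (hv : v ∈ s) : ∑ u ∈ s, signlessLapMatrix G v u = G.degree v + (#s - 1) := by
  have hadj : ∀ u ∈ s.erase v, signlessLapMatrix G v u = 1 := fun u hu ↦ by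
    obtain ⟨huv, hus⟩ := mem_erase.mp hu
    rw [signlessLapMatrix_apply_of_ne G huv.symm, if_pos (hs hv hus huv.symm)]
  rw [← add_sum_erase s _ hv, sum_congr rfl hadj]
  simp [signlessLapMatrix, degMatrix, card_erase_of_mem hv, Nat.cast_pred (card_pos.mpr ⟨v, hv⟩)]

end SignlessLaplacian

section SpectralRadius

variable {V : Type} [Fintype V] {G : SimpleGraph V} [DecidableRel G.Adj]

theorem degCount_eq_degree (v : V) : degCount G v = G.degree v := by
  rw [degCount, Nat.card_eq_fintype_card, card_neighborSet_eq_degree]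

theorem sum_degree_eq_two_mul_edgeCount : ∑ v, G.degree v = 2 * edgeCount G := by
  classical
  rw [sum_degrees_eq_twice_card_edges, edgeCount, Nat.card_eq_fintype_card, edgeFinset_card]

theorem qSpecRad_eq_sSup_spectrum [DecidableEq V] :
    qSpecRad G = sSup (spectrum ℝ (signlessLapMatrix G)) := by
  simp only [qSpecRad, signlessLapMatrix, degMatrix, ← degCount_eq_degree]
  congr!

-- Merris' bound: the degree vector is the test vector.
theorem qSpecRad_le_of_degree_sq_add_sum_degree_le [Nonempty V] {c : ℝ}
    (hpos : ∀ v, 0 < G.degree v)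
    (hc : ∀ v, (G.degree v : ℝ) ^ 2 + ∑ u ∈ G.neighborFinset v, (G.degree u : ℝ) ≤
      c * G.degree v) :
    qSpecRad G ≤ c := by
  classical
  have hpos' (v) : (0 : ℝ) < G.degree v := Nat.cast_pos.mpr (hpos v)
  have hc₀ : 0 ≤ c := by
    obtain ⟨v⟩ := ‹Nonempty V›
    exact nonneg_of_mul_nonneg_left (le_trans (by positivity) (hc v)) (hpos' v)
  rw [qSpecRad_eq_sSup_spectrum]
  refine Real.sSup_le (fun μ ↦ le_of_mem_spectrum_of_mulVec_le ?_ hpos' fun v ↦ ?_) hc₀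
  · intro u v huv
    rw [signlessLapMatrix_apply_of_ne G huv]
    positivity
  · simpa only [signlessLapMatrix_mulVec_apply, ← sq] using! hc v

theorem sum_neighborFinset_degree_add_card_le (hpos : ∀ v, 0 < G.degree v) (v : V) :
    ∑ u ∈ G.neighborFinset v, G.degree u + Fintype.card V ≤ 2 * edgeCount G + 1 := by
  classical
  have hv : v ∈ (G.neighborFinset v)ᶜ := mem_compl.mpr (G.notMem_neighborFinset_self v)
  have hcompl : #((G.neighborFinset v)ᶜ.erase v) ≤
      ∑ u ∈ (G.neighborFinset v)ᶜ.erase v, G.degree u := by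
    simpa only [smul_eq_mul, mul_one] using
      card_nsmul_le_sum ((G.neighborFinset v)ᶜ.erase v) (G.degree ·) 1 fun u _ ↦ hpos u
  rw [card_erase_of_mem hv, card_compl, card_neighborFinset_eq_degree] at hcompl
  have hsplit := sum_add_sum_compl (G.neighborFinset v) fun u ↦ G.degree u
  rw [← add_sum_erase _ _ hv, sum_degree_eq_two_mul_edgeCount] at hsplit
  omega

theorem qSpecRad_le_two_mul_edgeCount_div_add [Nonempty V] (hpos : ∀ v, 0 < G.degree v) :
    qSpecRad G ≤ 2 * edgeCount G / (Fintype.card V - 1) + (Fintype.card V - 2) := by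
  refine qSpecRad_le_of_degree_sq_add_sum_degree_le hpos fun v ↦ ?_
  have hdegree (u) : (G.degree u : ℝ) ≤ Fintype.card V - 1 := by
    rw [le_sub_iff_add_le]
    exact_mod_cast G.degree_lt_card_verts u
  have hsum : ∑ u ∈ G.neighborFinset v, (G.degree u : ℝ) ≤
      G.degree v * (Fintype.card V - 1) := by
    simpa using sum_le_card_nsmul (G.neighborFinset v) _ _ fun u _ ↦ hdegree u
  have hedge : ∑ u ∈ G.neighborFinset v, (G.degree u : ℝ) + Fintype.card V ≤
      2 * edgeCount G + 1 := by
    exact_mod_cast sum_neighborFinset_degree_add_card_le hpos v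
  have hpos_v : (0 : ℝ) < G.degree v := Nat.cast_pos.mpr (hpos v)
  have hcard : (0 : ℝ) < Fintype.card V - 1 := hpos_v.trans_le (hdegree v)
  rw [div_add' _ _ _ hcard.ne', div_mul_eq_mul_div, le_div_iff₀ hcard]
  have hprod : 0 ≤ ((Fintype.card V - 1 : ℝ) - G.degree v) *
      (G.degree v * (Fintype.card V - 1) - ∑ u ∈ G.neighborFinset v, (G.degree u : ℝ)) :=
    mul_nonneg (sub_nonneg.mpr (hdegree v)) (sub_nonneg.mpr hsum)
  linarith [mul_le_mul_of_nonneg_right hedge hpos_v.le]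

end SpectralRadius

theorem two_mul_card_sub_one_lt_qSpecRad {V : Type} [Finite V] {G : SimpleGraph V} {s : Finset V}
    (hs : G.IsClique s) {u v : V} (hu : u ∈ s) (hv : v ∉ s) (huv : G.Adj u v) :
    2 * ((#s : ℝ) - 1) < qSpecRad G := by
  classical
  have := Fintype.ofFinite V
  have hdegree : ∑ _w ∈ s, ((#s : ℝ) - 1) < ∑ w ∈ s, (G.degree w : ℝ) := by
    refine sum_lt_sum (fun w hw ↦ ?_) ⟨u, hu, ?_⟩
    · rw [sub_le_iff_le_add]
      exact_mod_cast card_le_degree_add_one_of_isClique hs hw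
    · have : (#s : ℝ) ≤ G.degree u := by
        exact_mod_cast card_le_degree_of_isClique_of_adj hs hu hv huv
      linarith
  have hcard : (0 : ℝ) < #s := by exact_mod_cast card_pos.mpr ⟨u, hu⟩
  refine lt_of_mul_lt_mul_right ?_ hcard.le
  calc 2 * ((#s : ℝ) - 1) * #s = ∑ _w ∈ s, ((#s : ℝ) - 1) + ∑ _w ∈ s, ((#s : ℝ) - 1) := by
        simp only [sum_const, nsmul_eq_mul]; ring
    _ < ∑ w ∈ s, (G.degree w : ℝ) + ∑ _w ∈ s, ((#s : ℝ) - 1) := by gcongr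
    _ = ∑ w ∈ s, ∑ x ∈ s, signlessLapMatrix G w x := by
        rw [← sum_add_distrib]
        exact sum_congr rfl fun w hw ↦ (sum_signlessLapMatrix_apply_of_isClique hs hw).symm
    _ ≤ qSpecRad G * #s := by
        rw [qSpecRad_eq_sSup_spectrum]
        exact sum_sum_le_sSup_spectrum_mul_card (isHermitian_signlessLapMatrix G) s

theorem Lgraph_adj {n k : ℕ} {i j : Fin n} : (Lgraph n k).Adj i j ↔
    i ≠ j ∧ (i.val = 0 ∨ j.val = 0 ∨ (i.val < n - k ∧ j.val < n - k) ∨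
      (n - k ≤ i.val ∧ n - k ≤ j.val)) := by
  simp only [Lgraph, fromRel_adj]
  tauto

theorem GammaGraph_adj {n t : ℕ} {i j : Fin n} : (GammaGraph n t).Adj i j ↔
    i ≠ j ∧ (i.val < 2 ∨ j.val < 2 ∨ (i.val < n - t ∧ j.val < n - t)) := by
  simp only [GammaGraph, fromRel_adj]
  tauto

theorem two_mul_sub_sub_one_lt_qSpecRad_Lgraph {n k : ℕ} (hk : 0 < k) (hkn : k < n) :
    2 * ((n : ℝ) - k - 1) < qSpecRad (Lgraph n k) := by
  classical
  let K : Finset (Fin n) := {i | i.val < n - k}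
  have hcard : (#K : ℝ) = n - k := by
    rw [Fin.card_filter_val_lt, min_eq_right (Nat.sub_le n k), Nat.cast_sub hkn.le]
  have hK : (Lgraph n k).IsClique K := fun i hi j hj hij ↦
    Lgraph_adj.mpr ⟨hij, by simp_all [K]⟩
  rw [← hcard]
  have hmem : (⟨0, by omega⟩ : Fin n) ∈ K := by simpa [K] using Nat.sub_pos_of_lt hkn
  have hnotMem : (⟨n - 1, by omega⟩ : Fin n) ∉ K := by simpa [K] using Nat.sub_le_sub_left hk n
  exact two_mul_card_sub_one_lt_qSpecRad hK hmem hnotMem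
    (Lgraph_adj.mpr ⟨ne_of_mem_of_not_mem hmem hnotMem, .inl rfl⟩)

theorem degree_GammaGraph {n t : ℕ} (ht : t + 2 ≤ n) [DecidableRel (GammaGraph n t).Adj]
    (i : Fin n) : (GammaGraph n t).degree i =
      if i.val < 2 then n - 1 else if i.val < n - t then n - t - 1 else 2 := by
  rw [← card_neighborFinset_eq_degree]
  split_ifs with h₂ ht'
  · have : (GammaGraph n t).neighborFinset i = univ.erase i := by
      ext j
      simp [GammaGraph_adj, h₂, eq_comm]
    simp [this]
  · have : (GammaGraph n t).neighborFinset i =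
        (univ.filter fun j : Fin n ↦ j.val < n - t).erase i := by
      ext j
      simp only [mem_neighborFinset, GammaGraph_adj, mem_erase, mem_filter_univ]
      grind
    rw [this, card_erase_of_mem (by simpa), Fin.card_filter_val_lt, min_eq_right (Nat.sub_le n t)]
  · have : (GammaGraph n t).neighborFinset i = univ.filter fun j : Fin n ↦ j.val < 2 := by
      ext j
      simp only [mem_neighborFinset, GammaGraph_adj, mem_filter_univ]
      grind
    rw [this, Fin.card_filter_val_lt, min_eq_right (by omega)]

theorem edgeCount_GammaGraph {n t : ℕ} (ht : t + 2 ≤ n) :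
    edgeCount (GammaGraph n t) = (n - t).choose 2 + 2 * t := by
  classical
  obtain ⟨m, rfl⟩ : ∃ m, n = 2 + m + t := ⟨n - t - 2, by omega⟩
  let f (k : ℕ) : ℕ := if k < 2 then m + t + 1 else if k < 2 + m then m + 1 else 2
  have hdegree (i : Fin (2 + m + t)) : (GammaGraph (2 + m + t) t).degree i = f i := by
    rw [degree_GammaGraph ht]
    grind
  have hsum : 2 * edgeCount (GammaGraph (2 + m + t) t) =
      2 * (m + t + 1) + m * (m + 1) + t * 2 := by
    rw [← sum_degree_eq_two_mul_edgeCount, sum_congr rfl fun i _ ↦ hdegree i,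
      Fin.sum_univ_eq_sum_range, sum_range_add, sum_range_add,
      sum_eq_card_nsmul (s := range 2) (b := m + t + 1) (by grind),
      sum_eq_card_nsmul (s := range m) (b := m + 1) (by grind),
      sum_eq_card_nsmul (s := range t) (b := 2) (by grind)]
    simp only [card_range, smul_eq_mul]
  have hchoose : (2 + m) * (m + 1) = (2 + m).choose 2 * 2 := by
    simpa [add_comm 2 m] using Nat.add_one_mul_choose_eq (m + 1) 1
  rw [Nat.add_sub_cancel]
  linarith

theorem qSpecRad_GammaGraph_le {n t : ℕ} (ht : t + 2 ≤ n) :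
    qSpecRad (GammaGraph n t) ≤ ((n - t) * (n - t - 1) + 4 * t) / (n - 1) + (n - 2) := by
  classical
  have : NeZero n := ⟨by omega⟩
  have hpos (i : Fin n) : 0 < (GammaGraph n t).degree i := by
    rw [degree_GammaGraph ht]
    split_ifs <;> omega
  refine (qSpecRad_le_two_mul_edgeCount_div_add hpos).trans_eq ?_
  rw [edgeCount_GammaGraph ht, Fintype.card_fin, Nat.cast_add, Nat.cast_choose_two,
    Nat.cast_sub (by omega)]
  push_cast
  ring

/-- Lemma 3.6: `q(L_{n,1}) > q(Γ_{n,2})` for `n ≥ 6`. -/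
theorem qSpecRad_Gamma2_lt (n : ℕ) (hn : 6 ≤ n) :
    qSpecRad (GammaGraph n 2) < qSpecRad (Lgraph n 1) := by
  have hn' : (6 : ℝ) ≤ n := by exact_mod_cast hn
  calc qSpecRad (GammaGraph n 2)
      ≤ ((n - 2) * (n - 2 - 1) + 4 * 2) / (n - 1) + (n - 2) := by
        exact_mod_cast qSpecRad_GammaGraph_le (n := n) (t := 2) (by omega)
    _ ≤ 2 * (n - 1 - 1) := by
        rw [div_add' _ _ _ (by linarith), div_le_iff₀ (by linarith)]
        linarith
    _ < qSpecRad (Lgraph n 1) := by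
        exact_mod_cast two_mul_sub_sub_one_lt_qSpecRad_Lgraph (n := n) one_pos (by omega)
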